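/- Let N ≥ 3 and 0 < δ < N−2. There exists a constant C > 0 such that for all y ∈ ℝ^N: ∫_{ℝ^N} |y−z|^{−(N−2)} (1+|z|)^{−(2+δ)} dz ≤ C (1+|y|)^{−δ}. -/

import Mathlib

open MeasureTheory

/-! By the triangle inequality `R = 1 + ‖y‖` is at most `‖y - z‖ + (1 + ‖z‖)`, so the larger of
these two summands is at least a third of the sum of `R` and the smaller one. Hence
`‖y - z‖ ^ (-p) * (1 + ‖z‖) ^ (-q)` is dominated by two functions of the form
`‖x‖ ^ (-a) * (R + ‖x‖) ^ (-b)`, one centred at `y` and one at the origin, with `(a, b) = (p, q)`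
and `(q, p)`. In dimension `d` these are integrable if `p, q < d < p + q`, and dilating by `R` shows
that their integrals are proportional to `R ^ (d - (p + q))`. -/

section RealPower

open Set Filter

lemma integrableOn_Ioi_rpow_mul_one_add_rpow {s q : ℝ} (hs : 0 < s) (hsq : s < q) :
    IntegrableOn (fun t : ℝ => t ^ (s - 1) * (1 + t) ^ (-q)) (Ioi 0) := by
  have hcont : ContinuousOn (fun t : ℝ => (1 + t) ^ (-q)) (Ici 0) :=
    (by fun_prop : Continuous fun t : ℝ => 1 + t).continuousOn.rpow_const
      fun t (ht : 0 ≤ t) => .inl (by positivity)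
  refine mellin_convergent_of_isBigO_scalar (a := q) (b := 0)
    ((hcont.mono Ioi_subset_Ici_self).locallyIntegrableOn measurableSet_Ioi) ?_ hsq ?_ hs
  · refine .of_norm_eventuallyLE ?_
    filter_upwards [eventually_gt_atTop 0] with t ht
    rw [Real.norm_of_nonneg (by positivity)]
    exact Real.rpow_le_rpow_of_nonpos ht (by linarith) (by linarith)
  · simpa only [neg_zero, Real.rpow_zero] using
      ((hcont 0 self_mem_Ici).mono Ioi_subset_Ici_self).isBigO_one ℝ

lemma rpow_neg_le_of_le_mul {c s t p : ℝ} (hc : 0 < c) (hs : 0 < s) (hp : 0 ≤ p)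
    (h : s ≤ c * t) : t ^ (-p) ≤ c ^ p * s ^ (-p) := by
  have ht : 0 < t := pos_of_mul_pos_right (hs.trans_le h) hc.le
  calc t ^ (-p) = c ^ p * (c * t) ^ (-p) := by
        rw [Real.mul_rpow hc.le ht.le, ← mul_assoc, ← Real.rpow_add hc, add_neg_cancel,
          Real.rpow_zero, one_mul]
    _ ≤ c ^ p * s ^ (-p) := by
        gcongr ?_ * ?_
        exact Real.rpow_le_rpow_of_nonpos hs h (neg_nonpos.mpr hp)

lemma rpow_neg_mul_rpow_neg_le {a b R p q : ℝ} (ha : 0 ≤ a) (hb : 0 ≤ b) (hR : 0 < R)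
    (hp : 0 ≤ p) (hq : 0 ≤ q) (h : R ≤ a + b) :
    a ^ (-p) * b ^ (-q) ≤
      3 ^ q * (a ^ (-p) * (R + a) ^ (-q)) + 3 ^ p * (b ^ (-q) * (R + b) ^ (-p)) := by
  wlog hab : a ≤ b generalizing a b p q
  · linarith [this hb ha hq hp (by linarith) (le_of_not_ge hab)]
  have hRa : R + a ≤ 3 * b := by linarith
  calc a ^ (-p) * b ^ (-q) ≤ a ^ (-p) * (3 ^ q * (R + a) ^ (-q)) := by
        gcongr ?_ * ?_
        exact rpow_neg_le_of_le_mul three_pos (by positivity) hq hRa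
    _ = 3 ^ q * (a ^ (-p) * (R + a) ^ (-q)) := mul_left_comm ..
    _ ≤ _ := le_add_of_nonneg_right (by positivity)

end RealPower

section RadialWeight

variable {E : Type*} [NormedAddCommGroup E]

/-- The radial weight `‖x‖ ^ (-p) * (R + ‖x‖) ^ (-q)`: a singularity of order `p` at the origin
and decay of order `p + q` at infinity, with the transition at distance `R`. -/
noncomputable def radialWeight (p q R : ℝ) (x : E) : ℝ :=
  ‖x‖ ^ (-p) * (R + ‖x‖) ^ (-q)

lemma radialWeight_nonneg {R : ℝ} (hR : 0 ≤ R) (p q : ℝ) (x : E) : 0 ≤ radialWeight p q R x := by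
  unfold radialWeight
  positivity

/-- A majorant of `‖y - z‖ ^ (-p) * (1 + ‖z‖) ^ (-q)` as a function of `z`: a combination of
a radial weight centred at `y` and one centred at `0`, both at the scale `1 + ‖y‖`. -/
noncomputable def twoCentreMajorant (p q : ℝ) (y z : E) : ℝ :=
  3 ^ q * radialWeight p q (1 + ‖y‖) (z - y) + 3 ^ p * radialWeight q p (1 + ‖y‖) z

lemma norm_sub_rpow_mul_one_add_norm_rpow_le_twoCentreMajorant {p q : ℝ} (hp : 0 ≤ p) (hq : 0 ≤ q)
    (y : E) {z : E} (hz : z ≠ 0) :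
    ‖y - z‖ ^ (-p) * (1 + ‖z‖) ^ (-q) ≤ twoCentreMajorant p q y z := by
  have hz' : 0 < ‖z‖ := norm_pos_iff.mpr hz
  have htri : 1 + ‖y‖ ≤ ‖y - z‖ + (1 + ‖z‖) := by linarith [norm_le_norm_sub_add y z]
  have hmono {s t r : ℝ} (hs : 0 < s) (hr : 0 ≤ r) (hst : s ≤ t) : t ^ (-r) ≤ s ^ (-r) :=
    Real.rpow_le_rpow_of_nonpos hs hst (neg_nonpos.mpr hr)
  rw [twoCentreMajorant, radialWeight, radialWeight, norm_sub_rev z y]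
  refine (rpow_neg_mul_rpow_neg_le (norm_nonneg _) (by positivity) (by positivity) hp hq
    htri).trans ?_
  gcongr _ + _ * (?_ * ?_)
  · exact hmono hz' hq (by linarith)
  · exact hmono (by positivity) hp (by linarith)

variable [NormedSpace ℝ E]

lemma radialWeight_eq_rpow_mul {R : ℝ} (hR : 0 < R) (p q : ℝ) (x : E) :
    radialWeight p q R x = R ^ (-(p + q)) * radialWeight p q 1 (R⁻¹ • x) := by
  have hx : ‖x‖ = R * ‖R⁻¹ • x‖ := by
    rw [norm_smul, norm_inv, Real.norm_of_nonneg hR.le, mul_inv_cancel_left₀ hR.ne']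
  have hRx : R + ‖x‖ = R * (1 + ‖R⁻¹ • x‖) := by rw [hx, mul_add, mul_one]
  rw [radialWeight, radialWeight, hRx, hx, Real.mul_rpow hR.le (norm_nonneg _),
    Real.mul_rpow hR.le (by positivity), neg_add, Real.rpow_add hR]
  ring

open Module

variable [FiniteDimensional ℝ E] [MeasurableSpace E] [BorelSpace E]
  (μ : Measure E) [μ.IsAddHaarMeasure] {p q : ℝ}

lemma integral_radialWeight {R : ℝ} (hR : 0 < R) (p q : ℝ) :
    ∫ x, radialWeight p q R x ∂μ =
      (∫ x, radialWeight p q 1 x ∂μ) * R ^ ((finrank ℝ E : ℝ) - (p + q)) := by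
  simp_rw [radialWeight_eq_rpow_mul hR p q]
  rw [integral_const_mul, Measure.integral_comp_inv_smul_of_nonneg μ _ hR.le, smul_eq_mul,
    sub_eq_neg_add, Real.rpow_add hR, Real.rpow_natCast]
  ring

lemma integrable_radialWeight_one (hp : p < finrank ℝ E)
    (hpq : finrank ℝ E < p + q) : Integrable (radialWeight p q 1) μ := by
  rcases subsingleton_or_nontrivial E with _ | _
  · exact .of_finite
  refine (integrable_fun_norm_addHaar μ (f := fun r : ℝ => r ^ (-p) * (1 + r) ^ (-q))).mpr ?_
  refine (integrableOn_Ioi_rpow_mul_one_add_rpow (s := finrank ℝ E - p) (q := q)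
    (by linarith) (by linarith)).congr_fun (fun r (hr : 0 < r) => ?_) measurableSet_Ioi
  have hexp : (finrank ℝ E : ℝ) - p - 1 = (finrank ℝ E - 1 : ℕ) + -p := by
    rw [Nat.cast_pred finrank_pos]
    ring
  simp only [hexp, Real.rpow_add hr, Real.rpow_natCast, smul_eq_mul, mul_assoc]

lemma integrable_radialWeight {R : ℝ} (hR : 0 < R) (hp : p < finrank ℝ E)
    (hpq : finrank ℝ E < p + q) : Integrable (radialWeight p q R) μ := by
  rw [funext (radialWeight_eq_rpow_mul (E := E) hR p q)]
  exact ((integrable_radialWeight_one μ hp hpq).comp_smul (inv_ne_zero hR.ne')).const_mul _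

lemma integrable_twoCentreMajorant (hp : p < finrank ℝ E) (hq : q < finrank ℝ E)
    (hpq : finrank ℝ E < p + q) (y : E) : Integrable (twoCentreMajorant p q y) μ :=
  (((integrable_radialWeight μ (by positivity) hp hpq).comp_sub_right y).const_mul _).add
    ((integrable_radialWeight μ (by positivity) hq (by rwa [add_comm])).const_mul _)

lemma integral_twoCentreMajorant (hp : p < finrank ℝ E) (hq : q < finrank ℝ E)
    (hpq : finrank ℝ E < p + q) (y : E) :
    ∫ z, twoCentreMajorant p q y z ∂μ =
      (3 ^ q * ∫ x, radialWeight p q 1 x ∂μ + 3 ^ p * ∫ x, radialWeight q p 1 x ∂μ) *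
        (1 + ‖y‖) ^ ((finrank ℝ E : ℝ) - (p + q)) := by
  have hR : 0 < 1 + ‖y‖ := by positivity
  have hcentred := (integrable_radialWeight μ hR hp hpq).comp_sub_right y
  have horigin := integrable_radialWeight μ hR hq (by rwa [add_comm])
  unfold twoCentreMajorant
  rw [integral_add (hcentred.const_mul _) (horigin.const_mul _), integral_const_mul,
    integral_const_mul, integral_sub_right_eq_self (radialWeight p q (1 + ‖y‖)),
    integral_radialWeight μ hR p q, integral_radialWeight μ hR q p, add_comm q p]
  ring

theorem stmt_1_general (hp : p < finrank ℝ E) (hq : q < finrank ℝ E)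
    (hpq : finrank ℝ E < p + q) :
    ∃ C : ℝ, 0 < C ∧ ∀ y : E,
      Integrable (fun z => ‖y - z‖ ^ (-p) * (1 + ‖z‖) ^ (-q)) μ ∧
      ∫ z, ‖y - z‖ ^ (-p) * (1 + ‖z‖) ^ (-q) ∂μ ≤
        C * (1 + ‖y‖) ^ ((finrank ℝ E : ℝ) - (p + q)) := by
  have hp0 : 0 < p := by linarith
  have hq0 : 0 < q := by linarith
  have : Nontrivial E := (finrank_pos_iff (R := ℝ)).mp (by exact_mod_cast hp0.trans hp)
  have hI (p q : ℝ) : 0 ≤ ∫ x, radialWeight p q 1 x ∂μ :=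
    integral_nonneg (radialWeight_nonneg zero_le_one p q)
  have hC : 0 ≤ 3 ^ q * ∫ x, radialWeight p q 1 x ∂μ + 3 ^ p * ∫ x, radialWeight q p 1 x ∂μ :=
    add_nonneg (mul_nonneg (by positivity) (hI p q)) (mul_nonneg (by positivity) (hI q p))
  refine ⟨_, add_pos_of_nonneg_of_pos hC one_pos, fun y => ?_⟩
  have hmajorant := integrable_twoCentreMajorant μ hp hq hpq y
  have hle : ∀ᵐ z ∂μ, ‖y - z‖ ^ (-p) * (1 + ‖z‖) ^ (-q) ≤ twoCentreMajorant p q y z :=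
    (μ.ae_ne 0).mono fun z hz =>
      norm_sub_rpow_mul_one_add_norm_rpow_le_twoCentreMajorant hp0.le hq0.le y hz
  have hint : Integrable (fun z => ‖y - z‖ ^ (-p) * (1 + ‖z‖) ^ (-q)) μ :=
    hmajorant.mono' (by fun_prop) <| hle.mono fun z hz =>
      (Real.norm_of_nonneg (by positivity)).trans_le hz
  refine ⟨hint, (integral_mono_ae hint hmajorant hle).trans ?_⟩
  rw [integral_twoCentreMajorant μ hp hq hpq y]
  exact mul_le_mul_of_nonneg_right (le_add_of_nonneg_right zero_le_one) (by positivity)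

end RadialWeight

theorem stmt_1 {N : ℕ} (hN : 3 ≤ N) (δ : ℝ) (hδ0 : 0 < δ) (hδ : δ < (N : ℝ) - 2) :
    ∃ C : ℝ, 0 < C ∧ ∀ y : EuclideanSpace ℝ (Fin N),
      (∫ z : EuclideanSpace ℝ (Fin N),
          ‖y - z‖ ^ (-((N : ℝ) - 2)) * (1 + ‖z‖) ^ (-(2 + δ))) ≤ C * (1 + ‖y‖) ^ (-δ) := by
  have hexp : (N : ℝ) - (N - 2 + (2 + δ)) = -δ := by ring
  obtain ⟨C, hC, h⟩ := stmt_1_general (volume : Measure (EuclideanSpace ℝ (Fin N)))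
    (p := N - 2) (q := 2 + δ) (by rw [finrank_euclideanSpace_fin]; linarith)
    (by rw [finrank_euclideanSpace_fin]; linarith) (by rw [finrank_euclideanSpace_fin]; linarith)
  exact ⟨C, hC, fun y => by simpa only [finrank_euclideanSpace_fin, hexp] using (h y).2⟩
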